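/- arXiv:2112.13728 — 3 statements merged into one kernel-verified Lean document; each statement's English description precedes it below -/
import Mathlib

section
/- Let r₁, r₂ > 0 and θ > 0 satisfy θ·r₁·r₂ < 1. Then the double contour integral over upper semicircles of radii r₁ and r₂ of log| (θ^{-1} − ζ₁ζ₂) / (θ^{-1} − ζ₁·conj(ζ₂)) | · (Im ζ₁ / ζ₁) · (Im ζ₂ / ζ₂) dζ₁ dζ₂ equals −π²·θ·r₁²·r₂²/2. Here log|·| is the real logarithm of the complex absolute value. -/
open Complex Real

/-- The iterated contour integral `∮∮ f(ζ₁,ζ₂) dζ₁ dζ₂` over upper semicircles of radii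
`r₁` and `r₂` centered at the origin. -/
noncomputable def semicircleIntegral2 (f : ℂ → ℂ → ℂ) (r₁ r₂ : ℝ) : ℂ :=
  ∫ t₁ in (0 : ℝ)..π, ∫ t₂ in (0 : ℝ)..π,
    f ((r₁ : ℂ) * Complex.exp (Complex.I * t₁)) ((r₂ : ℂ) * Complex.exp (Complex.I * t₂)) *
      (Complex.I * r₁ * Complex.exp (Complex.I * t₁)) *
      (Complex.I * r₂ * Complex.exp (Complex.I * t₂))


lemma aux_cos (k : ℤ) (hk : k ≠ 0) : ∫ t in (0:ℝ)..π, Real.cos (k * t) = 0 := by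
  have hk' : (k : ℝ) ≠ 0 := by exact_mod_cast hk
  rw [intervalIntegral.integral_comp_mul_left (fun x => Real.cos x) hk']
  simp [Real.sin_int_mul_pi]

lemma aux_sin (n : ℕ) : ∫ t in (0:ℝ)..π, Real.sin (n * t) * Real.sin t =
    if n = 1 then π / 2 else 0 := by
  have e : ∀ t : ℝ, Real.sin (n * t) * Real.sin t =
      (Real.cos (((n : ℤ) - 1 : ℤ) * t) - Real.cos (((n : ℤ) + 1 : ℤ) * t)) / 2 := by
    intro t
    have h1 : (((n : ℤ) - 1 : ℤ) : ℝ) * t = n * t - t := by push_cast; ring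
    have h2 : (((n : ℤ) + 1 : ℤ) : ℝ) * t = n * t + t := by push_cast; ring
    rw [h1, h2, Real.cos_sub, Real.cos_add]; ring
  simp_rw [e]
  rw [intervalIntegral.integral_div, intervalIntegral.integral_sub
    (Continuous.intervalIntegrable (by fun_prop) _ _)
    (Continuous.intervalIntegrable (by fun_prop) _ _), aux_cos ((n : ℤ) + 1) (by omega)]
  split_ifs with hn
  · subst hn; simp
  · rw [aux_cos _ (by omega)]; simp

lemma aux_log (ρ : ℝ) (h0 : 0 < ρ) (h1 : ρ < 1) (x : ℝ) :
    HasSum (fun n : ℕ => ρ ^ n / n * Real.cos (n * x))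
      (-Real.log ‖1 - (ρ : ℂ) * Complex.exp (Complex.I * x)‖) := by
  have hz : ‖(ρ : ℂ) * Complex.exp (Complex.I * x)‖ < 1 := by
    rw [norm_mul, mul_comm Complex.I, Complex.norm_exp_ofReal_mul_I]
    simpa [abs_of_pos h0] using h1
  have H := Complex.hasSum_re (Complex.hasSum_taylorSeries_neg_log hz)
  rw [Complex.neg_re, Complex.log_re] at H
  convert H using 2 with n
  rw [mul_pow, ← Complex.exp_nat_mul]
  have : (n : ℂ) * (Complex.I * x) = ((n * x : ℝ) : ℂ) * Complex.I := by push_cast; ring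
  rw [this]
  have : (ρ : ℂ) ^ n * Complex.exp (((n * x : ℝ) : ℂ) * Complex.I) / n =
    ((ρ ^ n / n : ℝ) : ℂ) * Complex.exp (((n * x : ℝ) : ℂ) * Complex.I) := by
    push_cast; ring
  rw [this, Complex.re_ofReal_mul, Complex.exp_ofReal_mul_I_re]

lemma aux_ker (ρ : ℝ) (h0 : 0 < ρ) (h1 : ρ < 1) (a b : ℝ) :
    HasSum (fun n : ℕ => 2 * (ρ ^ n / n) * Real.sin (n * a) * Real.sin (n * b))
      (Real.log ‖1 - (ρ : ℂ) * Complex.exp (Complex.I * (a + b : ℝ))‖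
        - Real.log ‖1 - (ρ : ℂ) * Complex.exp (Complex.I * (a - b : ℝ))‖) := by
  have H := (aux_log ρ h0 h1 (a - b)).sub (aux_log ρ h0 h1 (a + b))
  convert H using 1
  · rfl
  · funext n
    rw [mul_sub, mul_add, Real.cos_sub, Real.cos_add]; ring
  · ring

lemma aux_inner (ρ : ℝ) (h0 : 0 < ρ) (h1 : ρ < 1) (a : ℝ) :
    ∫ b in (0:ℝ)..π, (Real.log ‖1 - (ρ : ℂ) * Complex.exp (Complex.I * (a + b : ℝ))‖
        - Real.log ‖1 - (ρ : ℂ) * Complex.exp (Complex.I * (a - b : ℝ))‖) * Real.sin b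
      = π * ρ * Real.sin a := by
  have H := intervalIntegral.hasSum_integral_of_dominated_convergence
    (μ := MeasureTheory.volume) (a := 0) (b := π)
    (F := fun (n : ℕ) (b : ℝ) =>
      2 * (ρ ^ n / n) * Real.sin (n * a) * Real.sin (n * b) * Real.sin b)
    (f := fun b => (Real.log ‖1 - (ρ : ℂ) * Complex.exp (Complex.I * (a + b : ℝ))‖
        - Real.log ‖1 - (ρ : ℂ) * Complex.exp (Complex.I * (a - b : ℝ))‖) * Real.sin b)
    (fun n _ => 2 * ρ ^ n)
    (fun n => Continuous.aestronglyMeasurable (by fun_prop))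
    (fun n => by
      refine Filter.Eventually.of_forall fun b _ => ?_
      have hp : 0 < ρ ^ n := pow_pos h0 n
      have hd : ρ ^ n / n ≤ ρ ^ n := by
        rcases Nat.eq_zero_or_pos n with hn | hn
        · subst hn; simp
        · exact div_le_self hp.le (by exact_mod_cast hn)
      have hd0 : 0 ≤ ρ ^ n / n := by positivity
      rw [norm_mul, norm_mul, norm_mul, norm_mul, Real.norm_of_nonneg hd0]
      simp only [Real.norm_eq_abs, abs_two]
      calc 2 * (ρ ^ n / n) * |Real.sin (n * a)| * |Real.sin (n * b)| * |Real.sin b|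
          ≤ 2 * ρ ^ n * 1 * 1 * 1 := by
            gcongr <;> exact Real.abs_sin_le_one _
        _ = 2 * ρ ^ n := by ring)
    (Filter.Eventually.of_forall fun b _ =>
      (summable_geometric_of_lt_one h0.le h1).mul_left 2)
    intervalIntegrable_const
    (Filter.Eventually.of_forall fun b _ => (aux_ker ρ h0 h1 a b).mul_right _)
  have e : ∀ n : ℕ, ∫ b in (0:ℝ)..π,
      2 * (ρ ^ n / n) * Real.sin (n * a) * Real.sin (n * b) * Real.sin b
      = if n = 1 then π * ρ * Real.sin a else 0 := by
    intro n
    simp_rw [mul_assoc (2 * (ρ ^ n / n) * Real.sin (n * a))]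
    rw [intervalIntegral.integral_const_mul, aux_sin]
    split_ifs with hn
    · subst hn; simp; ring
    · simp
  simp_rw [e] at H
  exact H.unique (hasSum_ite_eq 1 _)

lemma aux_logdiv (r₁ r₂ θ : ℝ)
    (hr₁ : 0 < r₁) (hr₂ : 0 < r₂) (hθ : 0 < θ) (h : θ * r₁ * r₂ < 1) (a b : ℝ) :
    Real.log (norm
      ((((θ : ℂ))⁻¹ - ((r₁ : ℂ) * Complex.exp (Complex.I * a)) *
          ((r₂ : ℂ) * Complex.exp (Complex.I * b))) /
        (((θ : ℂ))⁻¹ - ((r₁ : ℂ) * Complex.exp (Complex.I * a)) *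
          (starRingEnd ℂ) ((r₂ : ℂ) * Complex.exp (Complex.I * b))))) =
    Real.log ‖1 - ((θ * r₁ * r₂ : ℝ) : ℂ) * Complex.exp (Complex.I * (a + b : ℝ))‖
        - Real.log ‖1 - ((θ * r₁ * r₂ : ℝ) : ℂ) * Complex.exp (Complex.I * (a - b : ℝ))‖ := by
  have hθ' : (θ : ℂ) ≠ 0 := by exact_mod_cast hθ.ne'
  have hp : 0 < θ * r₁ * r₂ := by positivity
  have hne : ∀ x : ℝ, ‖1 - ((θ * r₁ * r₂ : ℝ) : ℂ) * Complex.exp (Complex.I * x)‖ ≠ 0 := by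
    intro x hx
    rw [norm_eq_zero, sub_eq_zero] at hx
    have := congrArg norm hx
    rw [norm_mul, mul_comm Complex.I, Complex.norm_exp_ofReal_mul_I, norm_one, mul_one,
      Complex.norm_of_nonneg hp.le] at this
    linarith
  rw [← Real.log_div (hne _) (hne _), ← norm_div]
  congr 2
  have hc : (starRingEnd ℂ) ((r₂ : ℂ) * Complex.exp (Complex.I * b)) =
      (r₂ : ℂ) * Complex.exp (-(Complex.I * b)) := by
    rw [map_mul, ← Complex.exp_conj]; simp
  have e1 : (θ : ℂ)⁻¹ - ((r₁ : ℂ) * Complex.exp (Complex.I * a)) *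
          ((r₂ : ℂ) * Complex.exp (Complex.I * b)) = (θ : ℂ)⁻¹ *
      (1 - ((θ * r₁ * r₂ : ℝ) : ℂ) * Complex.exp (Complex.I * (a + b : ℝ))) := by
    push_cast
    rw [mul_add Complex.I, Complex.exp_add]
    field_simp
  have e2 : (θ : ℂ)⁻¹ - ((r₁ : ℂ) * Complex.exp (Complex.I * a)) *
          ((r₂ : ℂ) * Complex.exp (-(Complex.I * b))) = (θ : ℂ)⁻¹ *
      (1 - ((θ * r₁ * r₂ : ℝ) : ℂ) * Complex.exp (Complex.I * (a - b : ℝ))) := by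
    push_cast
    rw [mul_sub Complex.I, sub_eq_add_neg (Complex.I * (a : ℂ)), Complex.exp_add]
    field_simp
  rw [hc, e1, e2, mul_div_mul_left _ _ (inv_ne_zero hθ')]

lemma aux_im (r t : ℝ) : ((r : ℂ) * Complex.exp (Complex.I * t)).im = r * Real.sin t := by
  rw [mul_comm Complex.I, Complex.im_ofReal_mul, Complex.exp_ofReal_mul_I_im]

/-- The double semicircle contour integral of
`log| (θ⁻¹ − ζ₁ζ₂)/(θ⁻¹ − ζ₁·conj ζ₂) | · (Im ζ₁/ζ₁) · (Im ζ₂/ζ₂)`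
equals `−π²·θ·r₁²·r₂²/2`. -/
theorem semicircle_double_integral_log_kernel (r₁ r₂ θ : ℝ)
    (hr₁ : 0 < r₁) (hr₂ : 0 < r₂) (hθ : 0 < θ) (h : θ * r₁ * r₂ < 1) :
    semicircleIntegral2
      (fun ζ₁ ζ₂ =>
        ((Real.log (norm
            ((((θ : ℂ))⁻¹ - ζ₁ * ζ₂) / (((θ : ℂ))⁻¹ - ζ₁ * (starRingEnd ℂ) ζ₂))) : ℂ)) *
          ((ζ₁.im : ℂ) / ζ₁) * ((ζ₂.im : ℂ) / ζ₂))
      r₁ r₂ =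
      -(((π : ℂ)) ^ 2 * θ * r₁ ^ 2 * r₂ ^ 2 / 2) := by
  have hp : 0 < θ * r₁ * r₂ := by positivity
  unfold semicircleIntegral2
  simp only [aux_logdiv r₁ r₂ θ hr₁ hr₂ hθ h, aux_im]
  set L : ℝ → ℝ → ℝ := fun a b =>
    Real.log ‖1 - ((θ * r₁ * r₂ : ℝ) : ℂ) * Complex.exp (Complex.I * (a + b : ℝ))‖
        - Real.log ‖1 - ((θ * r₁ * r₂ : ℝ) : ℂ) * Complex.exp (Complex.I * (a - b : ℝ))‖ with hL
  have hr₁' : (r₁ : ℂ) ≠ 0 := by exact_mod_cast hr₁.ne'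
  have hr₂' : (r₂ : ℂ) ≠ 0 := by exact_mod_cast hr₂.ne'
  have key : ∀ a b : ℝ, ((L a b : ℝ) : ℂ) *
      (((r₁ * Real.sin a : ℝ) : ℂ) / ((r₁ : ℂ) * Complex.exp (Complex.I * a))) *
      (((r₂ * Real.sin b : ℝ) : ℂ) / ((r₂ : ℂ) * Complex.exp (Complex.I * b))) *
      (Complex.I * r₁ * Complex.exp (Complex.I * a)) *
      (Complex.I * r₂ * Complex.exp (Complex.I * b)) =
      ((-(r₁ * r₂ * Real.sin a) * (L a b * Real.sin b) : ℝ) : ℂ) := by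
    intro a b
    have ha := Complex.exp_ne_zero (Complex.I * a)
    have hb := Complex.exp_ne_zero (Complex.I * b)
    generalize Complex.exp (Complex.I * a) = A at *
    generalize Complex.exp (Complex.I * b) = B at *
    generalize L a b = M
    push_cast
    field_simp
    rw [Complex.I_sq]; ring
  have inner : ∀ a : ℝ, ∫ b in (0:ℝ)..π, L a b * Real.sin b
      = π * (θ * r₁ * r₂) * Real.sin a := aux_inner _ hp h
  have s2 : ∫ a in (0:ℝ)..π, Real.sin a * Real.sin a = π / 2 := by
    simpa using aux_sin 1
  calc _ = ∫ a in (0:ℝ)..π, ∫ b in (0:ℝ)..π,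
        ((-(r₁ * r₂ * Real.sin a) * (L a b * Real.sin b) : ℝ) : ℂ) := by
        simp_rw [← key]; rfl
    _ = ((∫ a in (0:ℝ)..π, -(r₁ * r₂ * (π * (θ * r₁ * r₂))) *
          (Real.sin a * Real.sin a) : ℝ) : ℂ) := by
        rw [← intervalIntegral.integral_ofReal]
        congr 1; funext a
        rw [intervalIntegral.integral_ofReal, intervalIntegral.integral_const_mul, inner]
        congr 1; ring
    _ = _ := by
        rw [intervalIntegral.integral_const_mul, s2]
        push_cast; ring
end

section
/- Let μ₁, ν₁, μ₂, ν₂ > 0, set a_k = μ_k + ν_k and r_k = √(μ_k ν_k) for k = 1, 2, let p, q ≥ 1 be integers, and let θ > 0 satisfy θ·r₁·r₂ < 1. Then the following integration-by-parts identity holds: −4·p·q · ∮∮_{upper semicircles, radii r₁, r₂} (a₁ + 2Re ζ₁)^{p−1} (a₂ + 2Re ζ₂)^{q−1} · log| (θ^{-1} − ζ₁ζ₂)/(θ^{-1} − ζ₁·conj(ζ₂)) | · (Im ζ₁/ζ₁)(Im ζ₂/ζ₂) dζ₁ dζ₂ = (2π²/θ) · (1/(2πi))² · ∮∮_{counterclockwise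 circles, radii r₁, r₂} (a₁ + 2Re ζ₁)^{p} (a₂ + 2Re ζ₂)^{q} / (θ^{-1} − ζ₁ζ₂)² dζ₁ dζ₂. -/
open Complex Real

lemma scl_fold (h : ℝ → ℂ) (hc : Continuous h) (hper : ∀ t, h (t + 2 * π) = h t) :
    ∫ t in (0:ℝ)..(2 * π), h t = ∫ t in (0:ℝ)..π, (h t + h (-t)) := by
  have hP : Function.Periodic h (2 * π) := hper
  have e1 := hP.intervalIntegral_add_eq 0 (-π)
  rw [zero_add, show -π + 2 * π = π by ring] at e1
  have hc' : Continuous fun t => h (-t) := hc.comp continuous_neg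
  rw [e1, intervalIntegral.integral_add (hc.intervalIntegrable _ _)
    (hc'.intervalIntegrable _ _), intervalIntegral.integral_comp_neg,
    neg_zero, add_comm]
  exact (intervalIntegral.integral_add_adjacent_intervals (hc.intervalIntegrable _ _)
    (hc.intervalIntegrable _ _)).symm

lemma scl_swap (f : ℝ → ℝ → ℂ) (hf : Continuous (Function.uncurry f)) (a b c d : ℝ) :
    ∫ x in a..b, ∫ y in c..d, f x y = ∫ y in c..d, ∫ x in a..b, f x y := by
  apply MeasureTheory.intervalIntegral_intervalIntegral_swap
  exact (hf.continuousOn.integrableOn_compact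
    (isCompact_uIcc.prod isCompact_uIcc)).mono_set
      (Set.prod_mono Set.uIoc_subset_uIcc Set.uIoc_subset_uIcc)

lemma scl_left (B₁ B₁' B₂ B₂' G G1 G2 : ℝ → ℂ)
    (h1 : ∀ t, HasDerivAt B₁ (B₁' t) t) (h2 : ∀ t, HasDerivAt B₂ (B₂' t) t)
    (c1 : Continuous B₁') (c2 : Continuous B₂')
    (hG : ∀ t, HasDerivAt G (G1 t) t) (hG1 : ∀ t, HasDerivAt G1 (G2 t) t)
    (cG2 : Continuous G2) (pG : ∀ t, G (t + 2 * π) = G t) (pG1 : ∀ t, G1 (t + 2 * π) = G1 t)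
    (oG1 : ∀ t, G1 (-t) = - G1 t) :
    ∫ t₁ in (0:ℝ)..π, ∫ t₂ in (0:ℝ)..π, B₁' t₁ * B₂' t₂ * (G (t₁ + t₂) - G (t₁ - t₂)) =
    ∫ t₁ in (0:ℝ)..π, ∫ t₂ in (0:ℝ)..π, B₁ t₁ * B₂ t₂ * (G2 (t₁ + t₂) + G2 (t₁ - t₂)) := by
  have cB1 : Continuous B₁ := continuous_iff_continuousAt.2 fun t => (h1 t).continuousAt
  have cB2 : Continuous B₂ := continuous_iff_continuousAt.2 fun t => (h2 t).continuousAt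
  have cG1 : Continuous G1 := continuous_iff_continuousAt.2 fun t => (hG1 t).continuousAt
  have s1 : ∀ t₁ : ℝ, ∫ t₂ in (0:ℝ)..π, B₁' t₁ * B₂' t₂ * (G (t₁ + t₂) - G (t₁ - t₂)) =
      ∫ t₂ in (0:ℝ)..π, - (B₁' t₁ * B₂ t₂ * (G1 (t₁ + t₂) + G1 (t₁ - t₂))) := by
    intro t₁
    have key := intervalIntegral.integral_mul_deriv_eq_deriv_mul (a := 0) (b := π)
      (u := fun t₂ => G (t₁ + t₂) - G (t₁ - t₂)) (u' := fun t₂ => G1 (t₁ + t₂) + G1 (t₁ - t₂))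
      (v := B₂) (v' := B₂')
      (fun t _ => by
        have := ((hG (t₁ + t)).comp_const_add t₁ t).sub ((hG (t₁ - t)).comp_const_sub t₁ t)
        rw [sub_neg_eq_add] at this
        exact this)
      (fun t _ => h2 t)
      (Continuous.intervalIntegrable (by fun_prop) _ _) (c2.intervalIntegrable _ _)
    have e : G (t₁ + π) = G (t₁ - π) := by rw [← pG (t₁ - π)]; congr 1; ring
    simp only [e, add_zero, sub_zero, sub_self, zero_mul, zero_sub] at key
    rw [← intervalIntegral.integral_neg] at key
    have k2 := congrArg (fun z => B₁' t₁ * z) key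
    simp only [← intervalIntegral.integral_const_mul] at k2
    refine Eq.trans ?_ (k2.trans ?_)
    · congr 1; ext t; ring
    · congr 1; ext t; ring
  have s2 : ∀ t₂ : ℝ, ∫ t₁ in (0:ℝ)..π, - (B₁' t₁ * B₂ t₂ * (G1 (t₁ + t₂) + G1 (t₁ - t₂))) =
      ∫ t₁ in (0:ℝ)..π, B₁ t₁ * B₂ t₂ * (G2 (t₁ + t₂) + G2 (t₁ - t₂)) := by
    intro t₂
    have key := intervalIntegral.integral_mul_deriv_eq_deriv_mul (a := 0) (b := π)
      (u := fun t₁ => G1 (t₁ + t₂) + G1 (t₁ - t₂)) (u' := fun t₁ => G2 (t₁ + t₂) + G2 (t₁ - t₂))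
      (v := B₁) (v' := B₁')
      (fun t _ => ((hG1 (t + t₂)).comp_add_const t t₂).add ((hG1 (t - t₂)).comp_sub_const t t₂))
      (fun t _ => h1 t)
      (Continuous.intervalIntegrable (by fun_prop) _ _) (c1.intervalIntegrable _ _)
    have e : G1 (π + t₂) + G1 (π - t₂) = 0 := by
      have : G1 (π - t₂) = - G1 (π + t₂) := by
        rw [← oG1, ← pG1 (-(π + t₂))]; congr 1; ring
      rw [this]; ring
    have e0 : G1 (0 + t₂) + G1 (0 - t₂) = 0 := by
      rw [zero_add, zero_sub, oG1]; ring
    rw [e, e0, zero_mul, zero_mul, sub_self, zero_sub] at key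
    have k2 := congrArg (fun z => - B₂ t₂ * z) key
    simp only [neg_mul_neg] at k2
    simp only [← intervalIntegral.integral_const_mul] at k2
    refine Eq.trans ?_ (k2.trans ?_)
    · congr 1; ext t; ring
    · congr 1; ext t; ring
  simp only [s1]
  rw [scl_swap _ (by unfold Function.uncurry; fun_prop)]
  simp only [s2]
  rw [scl_swap _ (by unfold Function.uncurry; fun_prop)]

lemma scl_right (B₁ B₂ K G2 : ℝ → ℂ) (c1 : Continuous B₁) (c2 : Continuous B₂)
    (cK : Continuous K) (p1 : ∀ t, B₁ (t + 2 * π) = B₁ t) (p2 : ∀ t, B₂ (t + 2 * π) = B₂ t)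
    (e1 : ∀ t, B₁ (-t) = B₁ t) (e2 : ∀ t, B₂ (-t) = B₂ t)
    (pK : ∀ t, K (t + 2 * π) = K t) (hG2 : ∀ t, G2 t = (K t + K (-t)) / 2) :
    ∫ t₁ in (0:ℝ)..π, ∫ t₂ in (0:ℝ)..π, B₁ t₁ * B₂ t₂ * (G2 (t₁ + t₂) + G2 (t₁ - t₂)) =
    (1 / 2) * ∫ t₁ in (0:ℝ)..(2 * π), ∫ t₂ in (0:ℝ)..(2 * π), B₁ t₁ * B₂ t₂ * K (t₁ + t₂) := by
  have s1 : ∀ t₁ : ℝ, ∫ t₂ in (0:ℝ)..(2 * π), B₁ t₁ * B₂ t₂ * K (t₁ + t₂) =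
      ∫ t₂ in (0:ℝ)..π, B₁ t₁ * B₂ t₂ * (K (t₁ + t₂) + K (t₁ - t₂)) := by
    intro t₁
    rw [scl_fold _ (by fun_prop) (fun t => by rw [p2, ← add_assoc, pK])]
    congr 1; ext t; rw [e2, ← sub_eq_add_neg]; ring
  simp only [s1]
  have cc : Continuous (Function.uncurry fun t₁ t₂ : ℝ =>
      B₁ t₁ * B₂ t₂ * (K (t₁ + t₂) + K (t₁ - t₂))) := by unfold Function.uncurry; fun_prop
  have cI : Continuous fun t₁ : ℝ =>
      ∫ t₂ in (0:ℝ)..π, B₁ t₁ * B₂ t₂ * (K (t₁ + t₂) + K (t₁ - t₂)) :=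
    intervalIntegral.continuous_parametric_intervalIntegral_of_continuous' cc 0 π
  rw [scl_fold _ cI (fun t => by
    simp only [p1]
    congr 1; ext t2
    rw [show t + 2 * π + t2 = t + t2 + 2 * π by ring, show t + 2 * π - t2 = t - t2 + 2 * π by ring,
      pK, pK])]
  rw [← intervalIntegral.integral_const_mul]
  congr 1; ext t₁
  rw [← intervalIntegral.integral_add (Continuous.intervalIntegrable (by fun_prop) _ _)
    (Continuous.intervalIntegrable (by fun_prop) _ _), ← intervalIntegral.integral_const_mul]
  congr 1; ext t₂
  rw [hG2, hG2, e1, show -t₁ + t₂ = -(t₁ - t₂) by ring, show -t₁ - t₂ = -(t₁ + t₂) by ring]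
  ring

/-- The point `s e^{iu}`. -/
noncomputable def sclZ (s : ℝ) (u : ℝ) : ℂ := (s : ℂ) * Complex.exp (Complex.I * u)

lemma sclZ_per (s t : ℝ) : sclZ s (t + 2 * π) = sclZ s t := by
  unfold sclZ
  congr 1
  push_cast
  rw [mul_add, show Complex.I * (2 * (π : ℂ)) = 2 * π * Complex.I by ring,
    Complex.exp_periodic]

lemma sclZ_deriv (s t : ℝ) : HasDerivAt (sclZ s) (Complex.I * sclZ s t) t := by
  have h0 : HasDerivAt (fun u : ℝ => Complex.I * (u : ℂ)) Complex.I t := by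
    simpa using (Complex.ofRealCLM.hasDerivAt (x := t)).const_mul Complex.I
  have := (h0.cexp).const_mul (s : ℂ)
  refine this.congr_deriv ?_
  unfold sclZ; ring

lemma sclZ_norm (s t : ℝ) (hs : 0 ≤ s) : ‖sclZ s t‖ = s := by
  unfold sclZ
  rw [norm_mul, mul_comm Complex.I, Complex.norm_exp_ofReal_mul_I, mul_one, Complex.norm_real,
    Real.norm_of_nonneg hs]

lemma sclZ_slit (s t : ℝ) (hs : 0 ≤ s) (hs1 : s < 1) : 1 - sclZ s t ∈ Complex.slitPlane := by
  left
  have := Complex.re_le_norm (sclZ s t)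
  rw [sclZ_norm s t hs] at this
  simp; linarith

lemma sclZ_conj (s t : ℝ) : (starRingEnd ℂ) (sclZ s t) = sclZ s (-t) := by
  unfold sclZ
  simp [← Complex.exp_conj]

lemma scl_logid (s t : ℝ) (hs : 0 ≤ s) (hs1 : s < 1) :
    ((Real.log ‖1 - sclZ s t‖ : ℝ) : ℂ) =
      (Complex.log (1 - sclZ s t) + Complex.log (1 - sclZ s (-t))) / 2 := by
  have : 1 - sclZ s (-t) = (starRingEnd ℂ) (1 - sclZ s t) := by
    rw [map_sub, map_one, sclZ_conj]
  rw [this, Complex.log_conj _ (Complex.slitPlane_arg_ne_pi (sclZ_slit s t hs hs1)),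
    Complex.add_conj, Complex.log_re]
  push_cast; ring

lemma scl_dlog (s t : ℝ) (hs : 0 ≤ s) (hs1 : s < 1) :
    HasDerivAt (fun u => Complex.log (1 - sclZ s u))
      (-Complex.I * (sclZ s t / (1 - sclZ s t))) t := by
  have := ((sclZ_deriv s t).const_sub 1).clog_real (sclZ_slit s t hs hs1)
  refine this.congr_deriv ?_
  ring

lemma scl_dlog2 (s t : ℝ) (hs : 0 ≤ s) (hs1 : s < 1) :
    HasDerivAt (fun u => -Complex.I * (sclZ s u / (1 - sclZ s u)))
      (sclZ s t / (1 - sclZ s t) ^ 2) t := by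
  have hne := Complex.slitPlane_ne_zero (sclZ_slit s t hs hs1)
  have := ((sclZ_deriv s t).div ((sclZ_deriv s t).const_sub 1) hne).const_mul (-Complex.I)
  refine this.congr_deriv ?_
  field_simp
  linear_combination (-sclZ s t) * Complex.I_sq

lemma scl_even {f : ℝ → ℂ} {f' : ℝ → ℂ} (h : ∀ t, HasDerivAt f (f' t) t) (t : ℝ) :
    HasDerivAt (fun u => f (-u)) (-f' (-t)) t := by
  have := (h (-t)).scomp t (hasDerivAt_neg t)
  exact this.congr_deriv (by simp)

lemma scl_B (a r : ℝ) (p : ℕ) (t : ℝ) :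
    HasDerivAt (fun t : ℝ => ((a : ℂ) + 2 * ((r * Real.cos t : ℝ) : ℂ)) ^ p)
      (-(2 * p * ((a : ℂ) + 2 * ((r * Real.cos t : ℝ) : ℂ)) ^ (p - 1) * ((r * Real.sin t : ℝ) : ℂ))) t := by
  have h := ((((((Real.hasDerivAt_cos t).const_mul r).ofReal_comp).const_mul (2 : ℂ)).const_add
    (a : ℂ)).pow p)
  refine h.congr_deriv ?_
  push_cast; ring

/-- Integration by parts (twice) converts the double semicircle integral against the
logarithmic kernel into a double full-circle integral against `(θ⁻¹ − ζ₁ζ₂)⁻²`. -/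
theorem semicircle_log_integral_by_parts
    (μ₁ ν₁ μ₂ ν₂ : ℝ) (hμ₁ : 0 < μ₁) (hν₁ : 0 < ν₁) (hμ₂ : 0 < μ₂) (hν₂ : 0 < ν₂)
    (p q : ℕ) (hp : 1 ≤ p) (hq : 1 ≤ q) (θ : ℝ) (hθ : 0 < θ)
    (a₁ a₂ r₁ r₂ : ℝ) (ha₁ : a₁ = μ₁ + ν₁) (ha₂ : a₂ = μ₂ + ν₂)
    (hr₁ : r₁ = Real.sqrt (μ₁ * ν₁)) (hr₂ : r₂ = Real.sqrt (μ₂ * ν₂))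
    (h : θ * r₁ * r₂ < 1) :
    (-(4 : ℂ)) * p * q *
      semicircleIntegral2
        (fun ζ₁ ζ₂ =>
          ((a₁ : ℂ) + 2 * (ζ₁.re : ℂ)) ^ (p - 1) * ((a₂ : ℂ) + 2 * (ζ₂.re : ℂ)) ^ (q - 1) *
            ((Real.log ‖
                ((((θ : ℂ))⁻¹ - ζ₁ * ζ₂) / (((θ : ℂ))⁻¹ - ζ₁ * (starRingEnd ℂ) ζ₂))‖ : ℂ)) *
            ((ζ₁.im : ℂ) / ζ₁) * ((ζ₂.im : ℂ) / ζ₂))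
        r₁ r₂ =
      ((2 : ℂ) * π ^ 2 / θ) * (1 / (2 * π * Complex.I)) ^ 2 *
        (∮ z₁ in C(0, r₁), ∮ z₂ in C(0, r₂),
          ((a₁ : ℂ) + 2 * (z₁.re : ℂ)) ^ p * ((a₂ : ℂ) + 2 * (z₂.re : ℂ)) ^ q /
            (((θ : ℂ))⁻¹ - z₁ * z₂) ^ 2) := by
  have hr₁0 : 0 < r₁ := by rw [hr₁]; positivity
  have hr₂0 : 0 < r₂ := by rw [hr₂]; positivity
  set s : ℝ := θ * r₁ * r₂ with hs
  have hs0 : 0 ≤ s := by positivity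
  have hθc : (θ : ℂ) ≠ 0 := by exact_mod_cast hθ.ne'
  have hr₁c : (r₁ : ℂ) ≠ 0 := by exact_mod_cast hr₁0.ne'
  have hr₂c : (r₂ : ℂ) ≠ 0 := by exact_mod_cast hr₂0.ne'
  have hne : ∀ t, 1 - sclZ s t ≠ 0 := fun t => Complex.slitPlane_ne_zero (sclZ_slit s t hs0 h)
  have hZc : Continuous (sclZ s) :=
    continuous_iff_continuousAt.2 fun t => (sclZ_deriv s t).continuousAt
  have hZ : ∀ x y : ℝ, (θ : ℂ)⁻¹ - (r₁ * Complex.exp (Complex.I * x)) *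
      (r₂ * Complex.exp (Complex.I * y)) = (θ : ℂ)⁻¹ * (1 - sclZ s (x + y)) := by
    intro x y
    unfold sclZ
    rw [hs]; push_cast
    rw [mul_add, Complex.exp_add]
    field_simp
  have hre : ∀ r t : ℝ, ((r : ℂ) * Complex.exp (Complex.I * t)).re = r * Real.cos t := by
    intro r t
    rw [Complex.re_ofReal_mul, mul_comm Complex.I, Complex.exp_ofReal_mul_I_re]
  have him : ∀ r t : ℝ, ((r : ℂ) * Complex.exp (Complex.I * t)).im = r * Real.sin t := by
    intro r t
    rw [Complex.im_ofReal_mul, mul_comm Complex.I, Complex.exp_ofReal_mul_I_im]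
  have hcj : ∀ r t : ℝ, (starRingEnd ℂ) ((r : ℂ) * Complex.exp (Complex.I * t)) =
      (r : ℂ) * Complex.exp (Complex.I * ((-t : ℝ) : ℂ)) := fun r t => sclZ_conj r t
  set B : ℝ → ℝ → ℕ → ℝ → ℂ := fun a r n t => ((a : ℂ) + 2 * ((r * Real.cos t : ℝ) : ℂ)) ^ n
    with hB
  set B' : ℝ → ℝ → ℕ → ℝ → ℂ := fun a r n t =>
    -(2 * n * ((a : ℂ) + 2 * ((r * Real.cos t : ℝ) : ℂ)) ^ (n - 1) * ((r * Real.sin t : ℝ) : ℂ))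
    with hB'
  set G : ℝ → ℂ := fun t => ((Real.log ‖1 - sclZ s t‖ : ℝ) : ℂ) with hG
  set K1 : ℝ → ℂ := fun t => -Complex.I * (sclZ s t / (1 - sclZ s t)) with hK1
  set K : ℝ → ℂ := fun t => sclZ s t / (1 - sclZ s t) ^ 2 with hK
  have cK : Continuous K := by
    rw [hK]
    exact hZc.div (by fun_prop) fun t => pow_ne_zero _ (hne t)
  have cB : ∀ a r n, Continuous (B a r n) := by intro a r n; rw [hB]; fun_prop
  have cB' : ∀ a r n, Continuous (B' a r n) := by intro a r n; rw [hB']; fun_prop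
  have hGd : ∀ t, HasDerivAt G ((K1 t - K1 (-t)) / 2) t := by
    intro t
    have h1 := ((scl_dlog s t hs0 h).add
      (scl_even (fun t => scl_dlog s t hs0 h) t)).div_const 2
    have : G = fun t => (Complex.log (1 - sclZ s t) + Complex.log (1 - sclZ s (-t))) / 2 := by
      ext t; exact scl_logid s t hs0 h
    rw [this]
    exact h1.congr_deriv (by rw [hK1]; ring)
  have hG1d : ∀ t, HasDerivAt (fun t => (K1 t - K1 (-t)) / 2) ((K t + K (-t)) / 2) t := by
    intro t
    have h1 := ((scl_dlog2 s t hs0 h).sub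
      (scl_even (fun t => scl_dlog2 s t hs0 h) t)).div_const 2
    exact h1.congr_deriv (by rw [hK]; ring)
  have pZn : ∀ t, sclZ s (-(t + 2 * π)) = sclZ s (-t) := by
    intro t
    rw [← sclZ_per s (-(t + 2 * π))]; congr 1; ring
  have L := scl_left (B a₁ r₁ p) (B' a₁ r₁ p) (B a₂ r₂ q) (B' a₂ r₂ q) G
    (fun t => (K1 t - K1 (-t)) / 2) (fun t => (K t + K (-t)) / 2)
    (scl_B a₁ r₁ p) (scl_B a₂ r₂ q) (cB' _ _ _) (cB' _ _ _) hGd hG1d (by fun_prop)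
    (fun t => by simp only [hG, sclZ_per]) (fun t => by simp only [hK1, sclZ_per, pZn])
    (fun t => by simp only [neg_neg]; ring)
  have R := scl_right (B a₁ r₁ p) (B a₂ r₂ q) K (fun t => (K t + K (-t)) / 2)
    (cB _ _ _) (cB _ _ _) cK (fun t => by simp only [hB, Real.cos_add_two_pi])
    (fun t => by simp only [hB, Real.cos_add_two_pi])
    (fun t => by simp only [hB, Real.cos_neg]) (fun t => by simp only [hB, Real.cos_neg])
    (fun t => by simp only [hK, sclZ_per]) (fun t => rfl)
  have F := L.trans R
  unfold semicircleIntegral2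
  rw [← intervalIntegral.integral_const_mul]
  simp only [← intervalIntegral.integral_const_mul]
  refine Eq.trans ?_ (F.trans ?_)
  · congr 1; ext t₁; congr 1; ext t₂
    have hl : Real.log ‖((((θ : ℂ))⁻¹ - (r₁ * Complex.exp (Complex.I * t₁)) *
        (r₂ * Complex.exp (Complex.I * t₂))) / (((θ : ℂ))⁻¹ - (r₁ * Complex.exp (Complex.I * t₁)) *
          (starRingEnd ℂ) (r₂ * Complex.exp (Complex.I * t₂))))‖ =
        Real.log ‖1 - sclZ s (t₁ + t₂)‖ - Real.log ‖1 - sclZ s (t₁ - t₂)‖ := by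
      rw [hcj, hZ, hZ, mul_div_mul_left _ _ (inv_ne_zero hθc), norm_div,
        Real.log_div (norm_ne_zero_iff.2 (hne _)) (norm_ne_zero_iff.2 (hne _)), ← sub_eq_add_neg]
    rw [hl, hre, hre, him, him]
    simp only [hB', hG]
    have e1 := Complex.exp_ne_zero (Complex.I * t₁)
    have e2 := Complex.exp_ne_zero (Complex.I * t₂)
    push_cast
    field_simp
    rw [Complex.I_sq]
    ring
  · simp only [circleIntegral, deriv_circleMap, smul_eq_mul]
    rw [← intervalIntegral.integral_const_mul, ← intervalIntegral.integral_const_mul]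
    simp only [← intervalIntegral.integral_const_mul]
    congr 1; ext t₁; congr 1; ext t₂
    have hc : ∀ r t : ℝ, circleMap 0 r t = r * Complex.exp (Complex.I * t) := by
      intro r t; rw [circleMap_zero, mul_comm Complex.I]
    have hπ : (π : ℂ) ≠ 0 := by exact_mod_cast Real.pi_ne_zero
    rw [hc, hc, hZ, hre, hre]
    have hZ2 : sclZ s (t₁ + t₂) = θ * (r₁ * Complex.exp (Complex.I * t₁)) *
      (r₂ * Complex.exp (Complex.I * t₂)) := by
      unfold sclZ
      rw [hs]; push_cast
      rw [mul_add, Complex.exp_add]; ring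
    have hn := hne (t₁ + t₂)
    simp only [hB, hK]
    generalize hw : 1 - sclZ s (t₁ + t₂) = w at hn ⊢
    rw [hZ2]
    field_simp
    try ring
end

section
/- Let μ₁, ν₁, μ₂, ν₂ > 0, set a_k = μ_k + ν_k, r_k = √(μ_k ν_k), and R = μ₁ν₁μ₂ν₂, and let θ > 0 satisfy θ·r₁·r₂ < 1. Then the double contour integral over upper semicircles of radii r₁ and r₂ of (a₁ + 2Re ζ₁)·(a₂ + 2Re ζ₂)·log| (θ^{-1} − ζ₁ζ₂)/(θ^{-1} − ζ₁·conj(ζ₂)) |·(Im ζ₁/ζ₁)·(Im ζ₂/ζ₂) dζ₁ dζ₂ equals −(π²·θ/8)·(4·a₁·a₂·R + 2·θ·R²). -/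
open Complex Real

lemma int_cos_int (m : ℤ) (hm : m ≠ 0) : ∫ t in (0:ℝ)..π, Real.cos (m * t) = 0 := by
  have hm' : (m : ℝ) ≠ 0 := by exact_mod_cast hm
  rw [intervalIntegral.integral_comp_mul_left (fun x => Real.cos x) hm', integral_cos]
  simp [Real.sin_int_mul_pi]

lemma ortho (k n : ℕ) (hk : 0 < k) :
    ∫ t in (0:ℝ)..π, Real.sin (k * t) * Real.sin (n * t) = if n = k then π / 2 else 0 := by
  have e : ∀ t : ℝ, Real.sin (k * t) * Real.sin (n * t)
      = (1/2) * Real.cos (((k - n : ℤ) : ℝ) * t) - (1/2) * Real.cos (((k + n : ℤ) : ℝ) * t) := by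
    intro t
    push_cast
    rw [sub_mul, add_mul, Real.cos_sub, Real.cos_add]; ring
  simp_rw [e]
  rw [intervalIntegral.integral_sub, intervalIntegral.integral_const_mul,
    intervalIntegral.integral_const_mul, int_cos_int (k + n) (by omega)]
  · split_ifs with h
    · subst h; simp; ring
    · rw [int_cos_int _ (by omega)]; ring
  · exact (Continuous.intervalIntegrable (by fun_prop) _ _)
  · exact (Continuous.intervalIntegrable (by fun_prop) _ _)

lemma log_series (q x : ℝ) (hq : 0 ≤ q) (hq1 : q < 1) :
    HasSum (fun n : ℕ => q ^ n / n * Real.cos (n * x))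
      (- Real.log ‖1 - (q : ℂ) * Complex.exp (Complex.I * x)‖) := by
  have hz : ‖(q : ℂ) * Complex.exp (Complex.I * x)‖ < 1 := by
    rw [norm_mul, mul_comm Complex.I, Complex.norm_exp_ofReal_mul_I]; simp [abs_of_nonneg hq, hq1]
  have H := Complex.hasSum_re (Complex.hasSum_taylorSeries_neg_log hz)
  rw [Complex.neg_re, Complex.log_re] at H
  convert H using 2 with n
  have : ((q : ℂ) * Complex.exp (Complex.I * x)) ^ n / n
     = ((q ^ n / n : ℝ) : ℂ) * Complex.exp ((n * x : ℝ) * Complex.I) := by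
    rw [mul_pow, ← Complex.exp_nat_mul]; push_cast; ring_nf
  rw [this, Complex.re_ofReal_mul, Complex.exp_ofReal_mul_I_re]

lemma kernel_series (q s t : ℝ) (hq : 0 ≤ q) (hq1 : q < 1) :
    HasSum (fun n : ℕ => 2 * (q ^ n / n) * Real.sin (n * s) * Real.sin (n * t))
      (Real.log ‖1 - (q : ℂ) * Complex.exp (Complex.I * (s + t : ℝ))‖ -
       Real.log ‖1 - (q : ℂ) * Complex.exp (Complex.I * (s - t : ℝ))‖) := by
  have H := (log_series q (s - t) hq hq1).sub (log_series q (s + t) hq hq1)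
  rw [neg_sub_neg] at H
  have e : (fun n : ℕ => 2 * (q ^ n / n) * Real.sin (n * s) * Real.sin (n * t)) =
      fun n : ℕ => q ^ n / n * Real.cos (n * (s - t)) - q ^ n / n * Real.cos (n * (s + t)) := by
    funext n
    rw [mul_sub (n : ℝ), mul_add (n : ℝ), Real.cos_sub, Real.cos_add]; ring
  rw [e]; exact H

lemma inner_int (q s a r : ℝ) (hq : 0 ≤ q) (hq1 : q < 1) :
    ∫ t in (0:ℝ)..π, (a + 2 * r * Real.cos t) * Real.sin t *
      (Real.log ‖1 - (q : ℂ) * Complex.exp (Complex.I * (s + t : ℝ))‖ -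
       Real.log ‖1 - (q : ℂ) * Complex.exp (Complex.I * (s - t : ℝ))‖)
    = π * (q * a * Real.sin s + q ^ 2 / 2 * r * Real.sin (2 * s)) := by
  have H := intervalIntegral.hasSum_integral_of_dominated_convergence (μ := MeasureTheory.volume)
    (a := 0) (b := π)
    (F := fun (n : ℕ) (t : ℝ) => (a + 2 * r * Real.cos t) * Real.sin t *
      (2 * (q ^ n / n) * Real.sin (n * s) * Real.sin (n * t)))
    (f := fun t => (a + 2 * r * Real.cos t) * Real.sin t *
      (Real.log ‖1 - (q : ℂ) * Complex.exp (Complex.I * (s + t : ℝ))‖ -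
       Real.log ‖1 - (q : ℂ) * Complex.exp (Complex.I * (s - t : ℝ))‖))
    (fun n _ => (|a| + 2 * |r|) * 2 * q ^ n)
    (fun n => (Continuous.aestronglyMeasurable (by fun_prop)))
    (fun n => Filter.Eventually.of_forall fun t _ => by
      have h1 : |a + 2 * r * Real.cos t| ≤ |a| + 2 * |r| := by
        refine (abs_add_le _ _).trans ?_
        rw [abs_mul, abs_mul, abs_two]
        have := mul_le_mul_of_nonneg_left (Real.abs_cos_le_one t) (by positivity : 0 ≤ 2 * |r|)
        linarith
      have h2 : q ^ n / n ≤ q ^ n := by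
        rcases Nat.eq_zero_or_pos n with rfl | hn
        · simp
        · exact div_le_self (by positivity) (by exact_mod_cast hn)
      have h3 : |Real.sin (n * s) * Real.sin (n * t)| ≤ 1 := by
        rw [abs_mul]
        exact mul_le_one₀ (Real.abs_sin_le_one _) (abs_nonneg _) (Real.abs_sin_le_one _)
      rw [Real.norm_eq_abs]
      have h0 : 0 ≤ q ^ n / n := by positivity
      calc _ = |a + 2 * r * Real.cos t| * |Real.sin t| * 2 * (q ^ n / n) *
              |Real.sin (n * s) * Real.sin (n * t)| := by
            simp only [abs_mul, abs_two, abs_of_nonneg h0]; ring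
        _ ≤ (|a| + 2 * |r|) * 1 * 2 * q ^ n * 1 := by
            gcongr
            exact Real.abs_sin_le_one _
        _ = _ := by ring)
    (Filter.Eventually.of_forall fun t _ => (summable_geometric_of_lt_one hq hq1).mul_left _)
    (by simp)
    (Filter.Eventually.of_forall fun t _ => (kernel_series q s t hq hq1).mul_left _)
  have B : ∀ n : ℕ, ∫ t in (0:ℝ)..π, (a + 2 * r * Real.cos t) * Real.sin t *
      (2 * (q ^ n / n) * Real.sin (n * s) * Real.sin (n * t)) =
      2 * (q ^ n / n) * Real.sin (n * s) * (a * (if n = 1 then π / 2 else 0) +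
        r * (if n = 2 then π / 2 else 0)) := by
    intro n
    rw [← ortho 1 n (by norm_num), ← ortho 2 n (by norm_num),
      ← intervalIntegral.integral_const_mul, ← intervalIntegral.integral_const_mul,
      ← intervalIntegral.integral_add (Continuous.intervalIntegrable (by fun_prop) _ _)
        (Continuous.intervalIntegrable (by fun_prop) _ _),
      ← intervalIntegral.integral_const_mul]
    congr 1; ext t
    push_cast
    rw [Real.sin_two_mul, one_mul]; ring
  simp_rw [B] at H
  rw [← H.tsum_eq, tsum_eq_sum (s := {1, 2})]
  · rw [Finset.sum_pair (by norm_num)]; norm_num; ring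
  · intro n hn
    simp only [Finset.mem_insert, Finset.mem_singleton, not_or] at hn
    simp [hn.1, hn.2]

lemma outer_int (a r c d : ℝ) :
    ∫ s in (0:ℝ)..π, (a + 2 * r * Real.cos s) * Real.sin s *
      (c * Real.sin s + d * Real.sin (2 * s)) = π / 2 * (a * c + r * d) := by
  have e : ∀ s : ℝ, (a + 2 * r * Real.cos s) * Real.sin s *
      (c * Real.sin s + d * Real.sin (2 * s)) =
      (a * c) * (Real.sin ((1:ℕ) * s) * Real.sin ((1:ℕ) * s)) +
      (a * d) * (Real.sin ((1:ℕ) * s) * Real.sin ((2:ℕ) * s)) +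
      (r * c) * (Real.sin ((2:ℕ) * s) * Real.sin ((1:ℕ) * s)) +
      (r * d) * (Real.sin ((2:ℕ) * s) * Real.sin ((2:ℕ) * s)) := by
    intro s; push_cast; rw [one_mul, Real.sin_two_mul]; ring
  simp_rw [e]
  rw [intervalIntegral.integral_add (Continuous.intervalIntegrable (by fun_prop) _ _)
        (Continuous.intervalIntegrable (by fun_prop) _ _),
      intervalIntegral.integral_add (Continuous.intervalIntegrable (by fun_prop) _ _)
        (Continuous.intervalIntegrable (by fun_prop) _ _),
      intervalIntegral.integral_add (Continuous.intervalIntegrable (by fun_prop) _ _)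
        (Continuous.intervalIntegrable (by fun_prop) _ _)]
  simp only [intervalIntegral.integral_const_mul]
  rw [ortho 1 1 (by norm_num), ortho 1 2 (by norm_num), ortho 2 1 (by norm_num),
    ortho 2 2 (by norm_num)]
  norm_num; ring

lemma one_sub_ne (q x : ℝ) (hq : 0 ≤ q) (hq1 : q < 1) :
    ‖1 - (q : ℂ) * Complex.exp (Complex.I * x)‖ ≠ 0 := by
  rw [norm_ne_zero_iff, sub_ne_zero]
  intro hh
  have := congrArg norm hh
  rw [norm_mul, mul_comm Complex.I, Complex.norm_exp_ofReal_mul_I] at this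
  simp [abs_of_nonneg hq] at this
  linarith

lemma log_split (θ r₁ r₂ s t : ℝ) (hθ : 0 < θ) (h1 : 0 < r₁) (h2 : 0 < r₂)
    (h : θ * r₁ * r₂ < 1) :
    Real.log ‖((θ : ℂ)⁻¹ - ((r₁ : ℂ) * Complex.exp (Complex.I * s)) *
        ((r₂ : ℂ) * Complex.exp (Complex.I * t))) /
      ((θ : ℂ)⁻¹ - ((r₁ : ℂ) * Complex.exp (Complex.I * s)) *
        (starRingEnd ℂ) ((r₂ : ℂ) * Complex.exp (Complex.I * t)))‖ =
     Real.log ‖1 - ((θ * r₁ * r₂ : ℝ) : ℂ) * Complex.exp (Complex.I * (s + t : ℝ))‖ -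
       Real.log ‖1 - ((θ * r₁ * r₂ : ℝ) : ℂ) * Complex.exp (Complex.I * (s - t : ℝ))‖ := by
  have hθ' : (θ : ℂ) ≠ 0 := by exact_mod_cast hθ.ne'
  have q0 : 0 ≤ θ * r₁ * r₂ := by positivity
  rw [← Real.log_div (one_sub_ne _ _ q0 h) (one_sub_ne _ _ q0 h), ← norm_div]
  congr 2
  have ep : Complex.exp (Complex.I * (s + t : ℝ)) =
      Complex.exp (Complex.I * s) * Complex.exp (Complex.I * t) := by
    rw [← Complex.exp_add]; push_cast; ring_nf
  have em : Complex.exp (Complex.I * (s - t : ℝ)) =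
      Complex.exp (Complex.I * s) * (starRingEnd ℂ) (Complex.exp (Complex.I * t)) := by
    rw [← Complex.exp_conj, ← Complex.exp_add]; simp; ring_nf
  rw [ep, em, ← mul_div_mul_left _ _ hθ']
  congr 1
  · rw [mul_sub, mul_inv_cancel₀ hθ']; push_cast; ring
  · rw [mul_sub, mul_inv_cancel₀ hθ', map_mul, Complex.conj_ofReal]; push_cast; ring

lemma re_im_exp (r t : ℝ) : ((r : ℂ) * Complex.exp (Complex.I * t)).re = r * Real.cos t ∧
    ((r : ℂ) * Complex.exp (Complex.I * t)).im = r * Real.sin t := by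
  rw [mul_comm Complex.I, Complex.re_ofReal_mul, Complex.im_ofReal_mul,
    Complex.exp_ofReal_mul_I_re, Complex.exp_ofReal_mul_I_im]
  exact ⟨rfl, rfl⟩

/-- The double semicircle contour integral of
`(a₁ + 2Re ζ₁)(a₂ + 2Re ζ₂)·log| (θ⁻¹ − ζ₁ζ₂)/(θ⁻¹ − ζ₁·conj ζ₂) |·(Im ζ₁/ζ₁)(Im ζ₂/ζ₂)`
equals `−(π²θ/8)(4a₁a₂R + 2θR²)` where `R = μ₁ν₁μ₂ν₂`. -/
theorem semicircle_double_integral_log_kernel_linear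
    (μ₁ ν₁ μ₂ ν₂ : ℝ) (hμ₁ : 0 < μ₁) (hν₁ : 0 < ν₁) (hμ₂ : 0 < μ₂) (hν₂ : 0 < ν₂)
    (θ : ℝ) (hθ : 0 < θ)
    (a₁ a₂ r₁ r₂ R : ℝ) (ha₁ : a₁ = μ₁ + ν₁) (ha₂ : a₂ = μ₂ + ν₂)
    (hr₁ : r₁ = Real.sqrt (μ₁ * ν₁)) (hr₂ : r₂ = Real.sqrt (μ₂ * ν₂))
    (hR : R = μ₁ * ν₁ * μ₂ * ν₂)
    (h : θ * r₁ * r₂ < 1) :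
    semicircleIntegral2
      (fun ζ₁ ζ₂ =>
        ((a₁ : ℂ) + 2 * (ζ₁.re : ℂ)) * ((a₂ : ℂ) + 2 * (ζ₂.re : ℂ)) *
          ((Real.log (norm
              ((((θ : ℂ))⁻¹ - ζ₁ * ζ₂) / (((θ : ℂ))⁻¹ - ζ₁ * (starRingEnd ℂ) ζ₂))) : ℂ)) *
          ((ζ₁.im : ℂ) / ζ₁) * ((ζ₂.im : ℂ) / ζ₂))
      r₁ r₂ =
      -(((π : ℂ)) ^ 2 * θ / 8) * (4 * a₁ * a₂ * R + 2 * θ * R ^ 2) := by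
  have h1 : 0 < r₁ := by rw [hr₁]; positivity
  have h2 : 0 < r₂ := by rw [hr₂]; positivity
  have s1 : r₁ ^ 2 = μ₁ * ν₁ := by rw [hr₁]; exact Real.sq_sqrt (by positivity)
  have s2 : r₂ ^ 2 = μ₂ * ν₂ := by rw [hr₂]; exact Real.sq_sqrt (by positivity)
  have hR' : R = r₁ ^ 2 * r₂ ^ 2 := by rw [s1, s2, hR]; ring
  have q0 : 0 ≤ θ * r₁ * r₂ := by positivity
  have key : ∀ s t : ℝ,
      (fun ζ₁ ζ₂ : ℂ => ((a₁ : ℂ) + 2 * (ζ₁.re : ℂ)) * ((a₂ : ℂ) + 2 * (ζ₂.re : ℂ)) *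
          ((Real.log (norm
              ((((θ : ℂ))⁻¹ - ζ₁ * ζ₂) / (((θ : ℂ))⁻¹ - ζ₁ * (starRingEnd ℂ) ζ₂))) : ℂ)) *
          ((ζ₁.im : ℂ) / ζ₁) * ((ζ₂.im : ℂ) / ζ₂))
        ((r₁ : ℂ) * Complex.exp (Complex.I * s)) ((r₂ : ℂ) * Complex.exp (Complex.I * t)) *
      (Complex.I * r₁ * Complex.exp (Complex.I * s)) *
      (Complex.I * r₂ * Complex.exp (Complex.I * t)) =
      (((-(r₁ * r₂) * ((a₁ + 2 * r₁ * Real.cos s) * Real.sin s)) *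
        ((a₂ + 2 * r₂ * Real.cos t) * Real.sin t *
      (Real.log ‖1 - ((θ * r₁ * r₂ : ℝ) : ℂ) * Complex.exp (Complex.I * (s + t : ℝ))‖ -
       Real.log ‖1 - ((θ * r₁ * r₂ : ℝ) : ℂ) * Complex.exp (Complex.I * (s - t : ℝ))‖)) : ℝ) : ℂ) := by
    intro s t
    beta_reduce
    rw [log_split θ r₁ r₂ s t hθ h1 h2 h, (re_im_exp r₁ s).1, (re_im_exp r₁ s).2,
      (re_im_exp r₂ t).1, (re_im_exp r₂ t).2]
    generalize Real.log ‖1 - ((θ * r₁ * r₂ : ℝ) : ℂ) * Complex.exp (Complex.I * (s + t : ℝ))‖ -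
       Real.log ‖1 - ((θ * r₁ * r₂ : ℝ) : ℂ) * Complex.exp (Complex.I * (s - t : ℝ))‖ = L
    have e1 := Complex.exp_ne_zero (Complex.I * s)
    have e2 := Complex.exp_ne_zero (Complex.I * t)
    have c1 : (r₁ : ℂ) ≠ 0 := by exact_mod_cast h1.ne'
    have c2 : (r₂ : ℂ) ≠ 0 := by exact_mod_cast h2.ne'
    have hI : Complex.I ^ 2 = -1 := Complex.I_sq
    generalize Complex.exp (Complex.I * s) = E1 at *
    generalize Complex.exp (Complex.I * t) = E2 at *
    push_cast
    field_simp
    rw [hI]; ring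
  unfold semicircleIntegral2
  simp_rw [key]
  simp only [intervalIntegral.integral_ofReal, intervalIntegral.integral_const_mul]
  simp_rw [inner_int _ _ a₂ r₂ q0 h]
  have e : ∀ s : ℝ, -(r₁ * r₂) * ((a₁ + 2 * r₁ * Real.cos s) * Real.sin s) *
      (π * (θ * r₁ * r₂ * a₂ * Real.sin s + (θ * r₁ * r₂) ^ 2 / 2 * r₂ * Real.sin (2 * s))) =
      (-(r₁ * r₂) * π) * ((a₁ + 2 * r₁ * Real.cos s) * Real.sin s *
      ((θ * r₁ * r₂ * a₂) * Real.sin s + ((θ * r₁ * r₂) ^ 2 / 2 * r₂) * Real.sin (2 * s))) := by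
    intro s; ring
  simp_rw [e]
  rw [intervalIntegral.integral_const_mul, outer_int, hR']
  push_cast
  ring
end
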